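/- Let t, s, a ∈ ℕ, ε ≥ 0, and let S ⊆ {0,…,2^t−1}² be a set of block positions such that every row index i occurs in at most d_r pairs of S and every column index j occurs in at most d_c pairs of S. For each (i,j) ∈ S let A_{ij} ∈ ℂ^{2^s×2^s}, let U_{ij} be a unitary on ℂ^{2^a}⊗ℂ^{2^s} that is an (α_{ij},a,ε)-block-encoding of A_{ij}, let α̂ ≥ max_{(i,j)∈S} α_{ij}, and let ᾱ_{ij} ∈ ℂ with |α̂ ᾱ_{ij} − α_{ij}| ≤ ε. Then ‖ Σ_{(i,j)∈S} |i⟩⟨j| ⊗ ( A_{ij} − α̂ ᾱ_{ij} (⟨0^a|⊗I_{2^s}) U_{ij} (|0^a⟩⊗I_{2^s}) ) ‖ ≤ 2 √(d_r d_c) · ε. -/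

import Mathlib

/-!
Write `B i j = A_{ij} − α̂ ᾱ_{ij} V_{ij}`, where `V_{ij}` is the top-left block of `U_{ij}`. As a
compression of a unitary, `V_{ij}` has norm at most `1` (`norm_corner_le_one`), so the splitting
`B i j = (A_{ij} − α_{ij} V_{ij}) − (α̂ ᾱ_{ij} − α_{ij}) V_{ij}` gives `‖B i j‖ ≤ 2 ε` on `S`.

A block matrix supported on `S` with blocks of norm at most `δ` has norm at most `√(d_r d_c) δ`
(`norm_blockSparse_le`): for a vector `x` with blocks `x_j`, Cauchy–Schwarz over the at most `d_r`
nonzero blocks in row `i` gives `‖(M x)_i‖² ≤ d_r δ² ∑_{j : (i,j) ∈ S} ‖x_j‖²`, and in the sum over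
`i` each `‖x_j‖²` occurs at most `d_c` times.
-/

open Matrix

/-- Spectral norm (ℓ²→ℓ² operator norm) of a matrix. -/
noncomputable def specNorm {𝕜 : Type*} [RCLike 𝕜] {m n : Type*} [Fintype m] [Fintype n]
    [DecidableEq n] (A : Matrix m n 𝕜) : ℝ :=
  ‖LinearMap.toContinuousLinearMap (Matrix.toEuclideanLin A)‖

/-- A matrix is unitary. -/
def IsUnitary {n : Type*} [Fintype n] [DecidableEq n] (U : Matrix n n ℂ) : Prop :=
  Uᴴ * U = 1 ∧ U * Uᴴ = 1

/-- `U` is an `(α, anc, ε)`-block-encoding of `A`. -/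
noncomputable def IsBlockEncoding {anc sys : Type*} [Fintype anc] [Fintype sys]
    [DecidableEq sys] [Zero anc] (α ε : ℝ)
    (U : Matrix (anc × sys) (anc × sys) ℂ) (A : Matrix sys sys ℂ) : Prop :=
  specNorm (A - (α : ℂ) • Matrix.of fun i j => U (0, i) (0, j)) ≤ ε

open scoped Matrix.Norms.L2Operator

lemma norm_le_one_of_isometry {m n : Type*} [Fintype m] [Fintype n] [DecidableEq m]
    [DecidableEq n] (E : Matrix m n ℂ) (hE : Eᴴ * E = 1) : ‖E‖ ≤ 1 := by
  have h := Matrix.l2_opNorm_conjTranspose_mul_self E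
  rw [hE, ← Matrix.diagonal_one, Matrix.l2_opNorm_diagonal] at h
  -- Only an inequality: the norm is `0` when `n` is empty.
  have h1 : ‖(fun _ => 1 : n → ℂ)‖ ≤ 1 :=
    (pi_norm_le_iff_of_nonneg zero_le_one).2 fun i => by simp
  nlinarith [norm_nonneg E]

/-- The corner is `Eᴴ U E`, where `E` is the isometry `v ↦ |0⟩ ⊗ v`. -/
lemma norm_corner_le_one {anc sys : Type*} [Fintype anc] [Fintype sys] [DecidableEq anc]
    [DecidableEq sys] [Zero anc] (U : Matrix (anc × sys) (anc × sys) ℂ) (hU : IsUnitary U) :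
    ‖(Matrix.of fun i j => U (0, i) (0, j) : Matrix sys sys ℂ)‖ ≤ 1 := by
  set E : Matrix (anc × sys) sys ℂ := (1 : Matrix (anc × sys) (anc × sys) ℂ).submatrix id
    (fun j => (0, j)) with hEdef
  have hE : Eᴴ * E = 1 := by
    ext i j
    simp [hEdef, Matrix.mul_apply, Matrix.one_apply]
  have hEn : ‖E‖ ≤ 1 := norm_le_one_of_isometry E hE
  have hUn : ‖U‖ ≤ 1 := norm_le_one_of_isometry U hU.1
  have hcorner : (Matrix.of fun i j => U (0, i) (0, j) : Matrix sys sys ℂ) = Eᴴ * (U * E) := by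
    ext i j
    simp [hEdef, Matrix.mul_apply, Matrix.one_apply]
  rw [hcorner]
  calc ‖Eᴴ * (U * E)‖ ≤ ‖Eᴴ‖ * (‖U‖ * ‖E‖) :=
        (Matrix.l2_opNorm_mul _ _).trans
          (mul_le_mul_of_nonneg_left (Matrix.l2_opNorm_mul _ _) (norm_nonneg _))
    _ ≤ 1 * (1 * 1) := by
        rw [Matrix.l2_opNorm_conjTranspose]
        gcongr
    _ = 1 := by norm_num

lemma norm_blockSparse_le {ι κ : Type*} [Fintype ι] [Fintype κ] [DecidableEq ι] [DecidableEq κ]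
    (d_r d_c : ℕ) (S : Finset (ι × ι))
    (hrow : ∀ i, (S.filter (fun p => p.1 = i)).card ≤ d_r)
    (hcol : ∀ j, (S.filter (fun p => p.2 = j)).card ≤ d_c)
    (B : ι → ι → Matrix κ κ ℂ) (δ : ℝ) (hδ : 0 ≤ δ) (hB : ∀ p ∈ S, ‖B p.1 p.2‖ ≤ δ) :
    ‖(Matrix.of fun p q : ι × κ => if (p.1, q.1) ∈ S then B p.1 q.1 p.2 q.2 else 0)‖ ≤
      Real.sqrt ((d_r : ℝ) * d_c) * δ := by
  set M : Matrix (ι × κ) (ι × κ) ℂ :=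
    Matrix.of fun p q : ι × κ => if (p.1, q.1) ∈ S then B p.1 q.1 p.2 q.2 else 0 with hM
  rw [Matrix.l2_opNorm_def]
  refine ContinuousLinearMap.opNorm_le_bound _ (by positivity) fun x => ?_
  set y : EuclideanSpace ℂ (ι × κ) := WithLp.toLp 2 (M *ᵥ x.ofLp) with hy
  change ‖y‖ ≤ _
  -- The blocks of a vector, each with its own Euclidean norm.
  let blk : EuclideanSpace ℂ (ι × κ) → ι → EuclideanSpace ℂ κ :=
    fun v j => WithLp.toLp 2 fun k => v (j, k)
  have hnorm : ∀ v, ‖v‖ ^ 2 = ∑ j, ‖blk v j‖ ^ 2 := by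
    intro v
    simp [blk, EuclideanSpace.norm_sq_eq, Fintype.sum_prod_type]
  let T : ι → Finset ι := fun i => Finset.univ.filter fun j => (i, j) ∈ S
  have hT : ∀ i, (T i).card ≤ d_r := by
    intro i
    refine le_trans (Finset.card_le_card_of_injOn (fun j => (i, j)) ?_ ?_) (hrow i)
    · intro j hj
      simpa [T] using hj
    · intro j _ k _ h
      simpa using h
  have hT' : ∀ j, (Finset.univ.filter fun i => (i, j) ∈ S).card ≤ d_c := by
    intro j
    refine le_trans (Finset.card_le_card_of_injOn (fun i => (i, j)) ?_ ?_) (hcol j)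
    · intro i hi
      simpa using hi
    · intro i _ k _ h
      simpa using h
  have hblk : ∀ i, blk y i = ∑ j ∈ T i, WithLp.toLp 2 (B i j *ᵥ (blk x j).ofLp) := by
    intro i
    ext k
    simp [blk, hy, hM, T, Matrix.mulVec, dotProduct, Fintype.sum_prod_type, Finset.sum_filter,
      ite_mul, Finset.sum_ite_irrel]
    refine Finset.sum_congr rfl fun j _ => ?_
    split_ifs <;> simp [Matrix.mulVec, dotProduct]
  have hrowbd : ∀ i, ‖blk y i‖ ^ 2 ≤ d_r * δ ^ 2 * ∑ j ∈ T i, ‖blk x j‖ ^ 2 := by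
    intro i
    have h1 : ‖blk y i‖ ≤ ∑ j ∈ T i, δ * ‖blk x j‖ := by
      rw [hblk]
      refine norm_sum_le_of_le _ fun j hj => ?_
      refine (Matrix.l2_opNorm_mulVec (B i j) (blk x j)).trans ?_
      exact mul_le_mul_of_nonneg_right (hB (i, j) (by simpa [T] using hj)) (norm_nonneg _)
    calc ‖blk y i‖ ^ 2 ≤ (∑ j ∈ T i, δ * ‖blk x j‖) ^ 2 := by gcongr
      _ ≤ (T i).card * ∑ j ∈ T i, (δ * ‖blk x j‖) ^ 2 := sq_sum_le_card_mul_sum_sq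
      _ ≤ d_r * ∑ j ∈ T i, (δ * ‖blk x j‖) ^ 2 := by
          gcongr
          exact hT i
      _ = d_r * δ ^ 2 * ∑ j ∈ T i, ‖blk x j‖ ^ 2 := by
          simp only [mul_pow, ← Finset.mul_sum]
          ring
  have hcolbd : ∑ i, ∑ j ∈ T i, ‖blk x j‖ ^ 2 ≤ d_c * ‖x‖ ^ 2 := by
    simp only [T, Finset.sum_filter]
    rw [Finset.sum_comm, hnorm x, Finset.mul_sum]
    refine Finset.sum_le_sum fun j _ => ?_
    rw [← Finset.sum_filter, Finset.sum_const, nsmul_eq_mul]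
    gcongr
    exact hT' j
  refine (sq_le_sq₀ (norm_nonneg _) (by positivity)).1 ?_
  calc ‖y‖ ^ 2 = ∑ i, ‖blk y i‖ ^ 2 := hnorm y
    _ ≤ ∑ i, d_r * δ ^ 2 * ∑ j ∈ T i, ‖blk x j‖ ^ 2 := Finset.sum_le_sum fun i _ => hrowbd i
    _ = d_r * δ ^ 2 * ∑ i, ∑ j ∈ T i, ‖blk x j‖ ^ 2 := by rw [Finset.mul_sum]
    _ ≤ d_r * δ ^ 2 * (d_c * ‖x‖ ^ 2) := by gcongr
    _ = (Real.sqrt ((d_r : ℝ) * d_c) * δ * ‖x‖) ^ 2 := by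
        rw [mul_pow, mul_pow, Real.sq_sqrt (by positivity)]
        ring

/-- error bound of the block-encoding of block-sparse matrices: the block
matrix assembled from the errors `A_{ij} − α̂ ᾱ_{ij} (⟨0^a|⊗I) U_{ij} (|0^a⟩⊗I)`, over a
`d_r`-row- and `d_c`-column-block-sparse set `S` of positions, has spectral norm at most
`2 √(d_r d_c) ε`. -/
theorem block_sparse_encoding_error (t s a : ℕ) (ε : ℝ) (hε : 0 ≤ ε) (d_r d_c : ℕ)
    (S : Finset (Fin (2 ^ t) × Fin (2 ^ t)))
    (hrow : ∀ i : Fin (2 ^ t), (S.filter (fun p => p.1 = i)).card ≤ d_r)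
    (hcol : ∀ j : Fin (2 ^ t), (S.filter (fun p => p.2 = j)).card ≤ d_c)
    (A : Fin (2 ^ t) → Fin (2 ^ t) → Matrix (Fin (2 ^ s)) (Fin (2 ^ s)) ℂ)
    (U : Fin (2 ^ t) → Fin (2 ^ t) →
      Matrix (Fin (2 ^ a) × Fin (2 ^ s)) (Fin (2 ^ a) × Fin (2 ^ s)) ℂ)
    (α : Fin (2 ^ t) → Fin (2 ^ t) → ℝ)
    (hα : ∀ p ∈ S, 0 ≤ α p.1 p.2)
    (hUuni : ∀ p ∈ S, IsUnitary (U p.1 p.2))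
    (hUbe : ∀ p ∈ S, IsBlockEncoding (α p.1 p.2) ε (U p.1 p.2) (A p.1 p.2))
    (αhat : ℝ) (hαhat : ∀ p ∈ S, α p.1 p.2 ≤ αhat)
    (αbar : Fin (2 ^ t) → Fin (2 ^ t) → ℂ)
    (hαbar : ∀ p ∈ S, ‖(αhat : ℂ) * αbar p.1 p.2 - (α p.1 p.2 : ℂ)‖ ≤ ε) :
    specNorm
      (Matrix.of fun (p q : Fin (2 ^ t) × Fin (2 ^ s)) =>
        if (p.1, q.1) ∈ S then
          A p.1 q.1 p.2 q.2 - (αhat : ℂ) * αbar p.1 q.1 * (U p.1 q.1) (0, p.2) (0, q.2)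
        else 0) ≤ 2 * Real.sqrt ((d_r : ℝ) * d_c) * ε := by
  let V : Fin (2 ^ t) → Fin (2 ^ t) → Matrix (Fin (2 ^ s)) (Fin (2 ^ s)) ℂ :=
    fun i j => Matrix.of fun k l => U i j (0, k) (0, l)
  have hB : ∀ p ∈ S,
      ‖A p.1 p.2 - ((αhat : ℂ) * αbar p.1 p.2) • V p.1 p.2‖ ≤ 2 * ε := by
    intro p hp
    have hV : ‖V p.1 p.2‖ ≤ 1 := norm_corner_le_one _ (hUuni p hp)
    have hA : ‖A p.1 p.2 - (α p.1 p.2 : ℂ) • V p.1 p.2‖ ≤ ε := hUbe p hp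
    have hsplit : A p.1 p.2 - ((αhat : ℂ) * αbar p.1 p.2) • V p.1 p.2 =
        (A p.1 p.2 - (α p.1 p.2 : ℂ) • V p.1 p.2) -
          ((αhat : ℂ) * αbar p.1 p.2 - (α p.1 p.2 : ℂ)) • V p.1 p.2 := by
      rw [sub_smul]
      abel
    rw [hsplit]
    refine (norm_sub_le _ _).trans ?_
    rw [norm_smul]
    have := mul_le_mul (hαbar p hp) hV (norm_nonneg _) hε
    linarith
  have h := norm_blockSparse_le d_r d_c S hrow hcol
    (fun i j => A i j - ((αhat : ℂ) * αbar i j) • V i j) (2 * ε) (by positivity) hB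
  calc _ ≤ Real.sqrt ((d_r : ℝ) * d_c) * (2 * ε) := h
    _ = 2 * Real.sqrt ((d_r : ℝ) * d_c) * ε := by ring
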